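/- Let A be a unique representation basis of the integers and let n be a positive integer. For each integer ℓ with 1 ≤ ℓ ≤ n, let N_ℓ be the number of elements of A in the interval ((ℓ−1)n, ℓn] and let M_ℓ be the number of elements of A in the interval [−ℓn, (−ℓ+1)n). Then (∑_{ℓ=1}^{n} (N_ℓ + M_ℓ)/ℓ^{1/2})² < 14n·(1 + log n). -/

import Mathlib

open Filter Set

/-- `repCount A n` is the number of representations of `n` as `a + a'` with
`a ≤ a'` and `a, a' ∈ A`. -/
noncomputable def repCount (A : Set ℤ) (n : ℤ) : ℕ :=
  {p : ℤ × ℤ | p.1 ∈ A ∧ p.2 ∈ A ∧ p.1 ≤ p.2 ∧ p.1 + p.2 = n}.ncard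

/-- `A` is a unique representation basis of `ℤ` if `r_A(n) = 1` for all `n`. -/
def IsUniqueRepBasis (A : Set ℤ) : Prop := ∀ n : ℤ, repCount A n = 1

/-- `countIn A y x` is the number of elements of `A` in the real interval `[y, x]`. -/
noncomputable def countIn (A : Set ℤ) (y x : ℝ) : ℕ :=
  {a : ℤ | a ∈ A ∧ y ≤ (a : ℝ) ∧ (a : ℝ) ≤ x}.ncard

/-!
A unique representation basis is a Sidon set: a difference `a - b ≠ 0` determines `a` and `b`, and
a sum `a + b` determines them up to order. Pairs inside `((ℓ - 1)n, ℓn]` or inside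
`[-ℓn, (-ℓ + 1)n)` have their differences in `(-n, n)`, and pairs taking one term from each of
these two blocks have their sums there, so counting over all `1 ≤ ℓ ≤ n` gives
`∑ (N_ℓ (N_ℓ - 1) + M_ℓ (M_ℓ - 1)) < 2n` and `∑ N_ℓ M_ℓ < 2n`. Hence `∑ (N_ℓ + M_ℓ)² < 9n`, and
Cauchy–Schwarz against `∑ 1 / ℓ ≤ 1 + log n` finishes.
-/

/-- A Sidon set: the sum of two elements determines the unordered pair of summands. The summands
need not be distinct, so this encodes `r_A(n) ≤ 1` for all `n`. -/
def IsSidon {G : Type*} [Add G] (A : Set G) : Prop :=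
  ∀ ⦃a⦄, a ∈ A → ∀ ⦃b⦄, b ∈ A → ∀ ⦃c⦄, c ∈ A → ∀ ⦃d⦄, d ∈ A →
    a + b = c + d → (a = c ∧ b = d) ∨ (a = d ∧ b = c)

theorem IsUniqueRepBasis.isSidon {A : Set ℤ} (hA : IsUniqueRepBasis A) : IsSidon A := by
  intro a ha b hb c hc d hd h
  obtain ⟨p, hp⟩ := Set.ncard_eq_one.1 (hA (a + b))
  have sorted_eq : ∀ x ∈ A, ∀ y ∈ A, x + y = a + b → (min x y, max x y) = p := by
    intro x hx y hy hxy
    refine hp.subset ⟨?_, ?_, min_le_max, (min_add_max x y).trans hxy⟩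
    · exact min_rec' (· ∈ A) hx hy
    · exact max_rec' (· ∈ A) hx hy
  have hsorted := (sorted_eq a ha b hb rfl).trans (sorted_eq c hc d hd h.symm).symm
  rw [Prod.mk.injEq] at hsorted
  omega

section Counting

variable {ι G : Type*} {A : Set G} {s : Finset ι} {B C : ι → Finset G} {D : Finset G}

theorem IsSidon.sum_card_offDiag_le_card [AddCommGroup G] (hA : IsSidon A)
    (hBA : ∀ i ∈ s, ↑(B i) ⊆ A) (hB : (s : Set ι).PairwiseDisjoint B)
    (hD : ∀ i ∈ s, ∀ a ∈ B i, ∀ b ∈ B i, a ≠ b → a - b ∈ D) :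
    ∑ i ∈ s, (B i).offDiag.card ≤ D.card := by
  rw [← Finset.card_sigma]
  refine Finset.card_le_card_of_injOn (fun p ↦ p.2.1 - p.2.2) ?_ ?_
  · rintro ⟨i, a, b⟩ h
    obtain ⟨hi, ha, hb, hab⟩ := by simpa using h
    exact hD i hi a ha b hb hab
  · rintro ⟨i, a, b⟩ h ⟨j, c, d⟩ h' hsub
    obtain ⟨hi, ha, hb, hab⟩ := by simpa using h
    obtain ⟨hj, hc, hd, -⟩ := by simpa using h'
    rcases hA (hBA i hi ha) (hBA j hj hd) (hBA j hj hc) (hBA i hi hb)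
      (sub_eq_sub_iff_add_eq_add.1 hsub) with ⟨rfl, rfl⟩ | ⟨rfl, -⟩
    · rw [hB.elim_finset hi hj a ha hc]
    · exact absurd rfl hab

theorem IsSidon.sum_card_mul_card_le_card [Add G] (hA : IsSidon A)
    (hBA : ∀ i ∈ s, ↑(B i) ⊆ A) (hCA : ∀ i ∈ s, ↑(C i) ⊆ A)
    (hB : (s : Set ι).PairwiseDisjoint B) (hBC : ∀ i ∈ s, ∀ j ∈ s, Disjoint (B i) (C j))
    (hD : ∀ i ∈ s, ∀ a ∈ B i, ∀ b ∈ C i, a + b ∈ D) :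
    ∑ i ∈ s, (B i).card * (C i).card ≤ D.card := by
  simp only [← Finset.card_product]
  rw [← Finset.card_sigma]
  refine Finset.card_le_card_of_injOn (fun p ↦ p.2.1 + p.2.2) ?_ ?_
  · rintro ⟨i, a, b⟩ h
    obtain ⟨hi, ha, hb⟩ := by simpa using h
    exact hD i hi a ha b hb
  · rintro ⟨i, a, b⟩ h ⟨j, c, d⟩ h' hadd
    obtain ⟨hi, ha, hb⟩ := by simpa using h
    obtain ⟨hj, hc, hd⟩ := by simpa using h'
    rcases hA (hBA i hi ha) (hCA i hi hb) (hBA j hj hc) (hCA j hj hd) hadd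
      with ⟨rfl, rfl⟩ | ⟨rfl, -⟩
    · rw [hB.elim_finset hi hj a ha hc]
    · exact absurd hd (Finset.disjoint_left.1 (hBC i hi j hj) ha)

end Counting

section Blocks

open Classical in
/-- The elements of `A` in the block `((ℓ - 1)n, ℓn]`, counted by `N_ℓ`. -/
noncomputable def posBlock (A : Set ℤ) (n ℓ : ℕ) : Finset ℤ :=
  {a ∈ Finset.Ioc (((ℓ : ℤ) - 1) * n) (ℓ * n) | a ∈ A}

open Classical in
/-- The elements of `A` in the block `[-ℓn, (-ℓ + 1)n)`, counted by `M_ℓ`. -/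
noncomputable def negBlock (A : Set ℤ) (n ℓ : ℕ) : Finset ℤ :=
  {a ∈ Finset.Ico (-((ℓ : ℤ) * n)) ((-(ℓ : ℤ) + 1) * n) | a ∈ A}

variable {A : Set ℤ} {n k ℓ : ℕ} {a b : ℤ}

theorem mem_posBlock : a ∈ posBlock A n ℓ ↔ a ∈ A ∧ ((ℓ : ℤ) - 1) * n < a ∧ a ≤ ℓ * n := by
  simp [posBlock, and_comm]

theorem mem_negBlock :
    a ∈ negBlock A n ℓ ↔ a ∈ A ∧ -((ℓ : ℤ) * n) ≤ a ∧ a < (-(ℓ : ℤ) + 1) * n := by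
  simp [negBlock, and_comm]

theorem posBlock_subset (A : Set ℤ) (n ℓ : ℕ) : ↑(posBlock A n ℓ) ⊆ A :=
  fun _ ha ↦ (mem_posBlock.1 ha).1

theorem negBlock_subset (A : Set ℤ) (n ℓ : ℕ) : ↑(negBlock A n ℓ) ⊆ A :=
  fun _ ha ↦ (mem_negBlock.1 ha).1

theorem ncard_eq_card_posBlock (A : Set ℤ) (n ℓ : ℕ) :
    {a : ℤ | a ∈ A ∧ ((ℓ : ℤ) - 1) * n < a ∧ a ≤ (ℓ : ℤ) * n}.ncard = (posBlock A n ℓ).card := by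
  simp only [← mem_posBlock, Finset.setOfPred_mem, Set.ncard_coe_finset]

theorem ncard_eq_card_negBlock (A : Set ℤ) (n ℓ : ℕ) :
    {a : ℤ | a ∈ A ∧ -((ℓ : ℤ) * n) ≤ a ∧ a < (-(ℓ : ℤ) + 1) * n}.ncard =
      (negBlock A n ℓ).card := by
  simp only [← mem_negBlock, Finset.setOfPred_mem, Set.ncard_coe_finset]

theorem pairwise_disjoint_posBlock (A : Set ℤ) (n : ℕ) :
    Pairwise (Function.onFun Disjoint (posBlock A n)) := by
  intro ℓ m hne
  refine Finset.disjoint_left.2 fun a ha hb ↦ ?_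
  have hne' : (ℓ : ℤ) - 1 ≠ m - 1 := by omega
  have hdisj := Set.pairwise_disjoint_Ioc_zsmul (n : ℤ) hne'
  simp only [Function.onFun, smul_eq_mul, sub_add_cancel] at hdisj
  exact Set.disjoint_left.1 hdisj (mem_posBlock.1 ha).2 (mem_posBlock.1 hb).2

theorem pairwise_disjoint_negBlock (A : Set ℤ) (n : ℕ) :
    Pairwise (Function.onFun Disjoint (negBlock A n)) := by
  intro ℓ m hne
  refine Finset.disjoint_left.2 fun a ha hb ↦ ?_
  have hne' : -(ℓ : ℤ) ≠ -m := by omega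
  have hdisj := Set.pairwise_disjoint_Ico_zsmul (n : ℤ) hne'
  simp only [Function.onFun, smul_eq_mul, neg_mul] at hdisj
  exact Set.disjoint_left.1 hdisj (mem_negBlock.1 ha).2 (mem_negBlock.1 hb).2

theorem pos_of_mem_posBlock (hℓ : 1 ≤ ℓ) (ha : a ∈ posBlock A n ℓ) : 0 < a := by
  have : 0 ≤ ((ℓ : ℤ) - 1) * n := mul_nonneg (by omega) (by omega)
  exact this.trans_lt (mem_posBlock.1 ha).2.1

theorem neg_of_mem_negBlock (hℓ : 1 ≤ ℓ) (ha : a ∈ negBlock A n ℓ) : a < 0 := by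
  have : (-(ℓ : ℤ) + 1) * n ≤ 0 := mul_nonpos_of_nonpos_of_nonneg (by omega) (by omega)
  exact (mem_negBlock.1 ha).2.2.trans_le this

theorem disjoint_posBlock_negBlock {m : ℕ} (hℓ : 1 ≤ ℓ) (hm : 1 ≤ m) :
    Disjoint (posBlock A n ℓ) (negBlock A n m) :=
  Finset.disjoint_left.2 fun _ ha hb ↦
    (pos_of_mem_posBlock hℓ ha).asymm (neg_of_mem_negBlock hm hb)

theorem sub_mem_Ioo_of_mem_posBlock (ha : a ∈ posBlock A n ℓ) (hb : b ∈ posBlock A n ℓ) :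
    a - b ∈ Finset.Ioo (-(n : ℤ)) n := by
  rw [mem_posBlock] at ha hb
  rw [Finset.mem_Ioo]
  constructor <;> linarith

theorem sub_mem_Ioo_of_mem_negBlock (ha : a ∈ negBlock A n ℓ) (hb : b ∈ negBlock A n ℓ) :
    a - b ∈ Finset.Ioo (-(n : ℤ)) n := by
  rw [mem_negBlock] at ha hb
  rw [Finset.mem_Ioo]
  constructor <;> linarith

theorem add_mem_Ioo_of_mem_blocks (ha : a ∈ posBlock A n ℓ) (hb : b ∈ negBlock A n ℓ) :
    a + b ∈ Finset.Ioo (-(n : ℤ)) n := by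
  rw [mem_posBlock] at ha
  rw [mem_negBlock] at hb
  rw [Finset.mem_Ioo]
  constructor <;> linarith

theorem pairwiseDisjoint_sumElim_blocks (A : Set ℤ) (n k : ℕ) :
    (((Finset.Icc 1 k).disjSum (Finset.Icc 1 k) : Finset (ℕ ⊕ ℕ)) : Set (ℕ ⊕ ℕ)).PairwiseDisjoint
      (Sum.elim (posBlock A n) (negBlock A n)) := by
  rintro (ℓ | ℓ) hℓ (m | m) hm hne
  · exact pairwise_disjoint_posBlock A n (by simpa using hne)
  · exact disjoint_posBlock_negBlock (by simp_all) (by simp_all)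
  · exact (disjoint_posBlock_negBlock (by simp_all) (by simp_all)).symm
  · exact pairwise_disjoint_negBlock A n (by simpa using hne)

theorem IsSidon.sum_card_offDiag_blocks_lt (hA : IsSidon A) (hn : 0 < n) (k : ℕ) :
    ∑ ℓ ∈ Finset.Icc 1 k, ((posBlock A n ℓ).offDiag.card + (negBlock A n ℓ).offDiag.card) <
      2 * n := by
  -- Treating the positive and the negative blocks as one family, indexed by a sum type, ensures
  -- that together they use each difference at most once.
  have hle := hA.sum_card_offDiag_le_card
    (Sum.rec (fun ℓ _ ↦ posBlock_subset A n ℓ) fun ℓ _ ↦ negBlock_subset A n ℓ)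
    (pairwiseDisjoint_sumElim_blocks A n k)
    (Sum.rec (fun _ _ _ ha _ hb _ ↦ sub_mem_Ioo_of_mem_posBlock ha hb)
      fun _ _ _ ha _ hb _ ↦ sub_mem_Ioo_of_mem_negBlock ha hb)
  rw [Finset.sum_disjSum, ← Finset.sum_add_distrib, Int.card_Ioo] at hle
  simp only [Sum.elim_inl, Sum.elim_inr] at hle
  omega

theorem IsSidon.sum_card_posBlock_mul_card_negBlock_lt (hA : IsSidon A) (hn : 0 < n) (k : ℕ) :
    ∑ ℓ ∈ Finset.Icc 1 k, (posBlock A n ℓ).card * (negBlock A n ℓ).card < 2 * n := by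
  have hle := hA.sum_card_mul_card_le_card (s := Finset.Icc 1 k)
    (fun ℓ _ ↦ posBlock_subset A n ℓ) (fun ℓ _ ↦ negBlock_subset A n ℓ)
    ((pairwise_disjoint_posBlock A n).set_pairwise _)
    (fun _ hℓ _ hm ↦ disjoint_posBlock_negBlock (Finset.mem_Icc.1 hℓ).1 (Finset.mem_Icc.1 hm).1)
    (fun _ _ _ ha _ hb ↦ add_mem_Ioo_of_mem_blocks ha hb)
  rw [Int.card_Ioo] at hle
  omega

theorem five_mul_sq_card_add_card_le {α : Type*} (B C : Finset α) :
    5 * (B.card + C.card) ^ 2 ≤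
      6 * (B.offDiag.card + C.offDiag.card) + 12 * (B.card * C.card) + 9 := by
  -- The `s = #B + #C` diagonal pairs are absorbed by `6s ≤ s² + 9`.
  rw [Finset.offDiag_card, Finset.offDiag_card]
  zify [Nat.le_mul_self B.card, Nat.le_mul_self C.card]
  linarith [sq_nonneg ((B.card : ℤ) + C.card - 3)]

theorem IsSidon.five_mul_sum_sq_card_blocks_lt (hA : IsSidon A) (hn : 0 < n) (k : ℕ) :
    5 * ∑ ℓ ∈ Finset.Icc 1 k, ((posBlock A n ℓ).card + (negBlock A n ℓ).card) ^ 2 <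
      36 * n + 9 * k := by
  have hdiff := hA.sum_card_offDiag_blocks_lt hn k
  have hadd := hA.sum_card_posBlock_mul_card_negBlock_lt hn k
  have hsum := Finset.sum_le_sum fun ℓ (_ : ℓ ∈ Finset.Icc 1 k) ↦
    five_mul_sq_card_add_card_le (posBlock A n ℓ) (negBlock A n ℓ)
  rw [← Finset.mul_sum, Finset.sum_add_distrib, Finset.sum_add_distrib, ← Finset.mul_sum,
    ← Finset.mul_sum, Finset.sum_const, Nat.card_Icc, smul_eq_mul] at hsum
  omega

end Blocks

theorem sum_inv_natCast_le_one_add_log (n : ℕ) :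
    ∑ ℓ ∈ Finset.Icc 1 n, (ℓ : ℝ)⁻¹ ≤ 1 + Real.log n := by
  simpa [harmonic_eq_sum_Icc] using harmonic_le_one_add_log n

theorem sq_sum_div_sqrt_le (x : ℕ → ℝ) (n : ℕ) :
    (∑ ℓ ∈ Finset.Icc 1 n, x ℓ / √ℓ) ^ 2 ≤
      (∑ ℓ ∈ Finset.Icc 1 n, x ℓ ^ 2) * (1 + Real.log n) := by
  calc (∑ ℓ ∈ Finset.Icc 1 n, x ℓ / √ℓ) ^ 2
    _ ≤ (∑ ℓ ∈ Finset.Icc 1 n, x ℓ ^ 2) * ∑ ℓ ∈ Finset.Icc 1 n, (ℓ : ℝ)⁻¹ :=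
      Finset.sum_sq_le_sum_mul_sum_of_sq_le_mul _ (fun ℓ _ ↦ sq_nonneg (x ℓ))
        (fun ℓ _ ↦ by positivity) fun ℓ _ ↦ by
          rw [div_pow, Real.sq_sqrt ℓ.cast_nonneg, div_eq_mul_inv]
    _ ≤ (∑ ℓ ∈ Finset.Icc 1 n, x ℓ ^ 2) * (1 + Real.log n) := by
      gcongr
      exact sum_inv_natCast_le_one_add_log n

theorem urb_weighted_sum_sq_lt_general (A : Set ℤ) (hA : IsSidon A) (n : ℕ) (hn : 0 < n)
    (N M : ℕ → ℕ)
    (hN : ∀ ℓ : ℕ, N ℓ = {a : ℤ | a ∈ A ∧ ((ℓ : ℤ) - 1) * n < a ∧ a ≤ (ℓ : ℤ) * n}.ncard)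
    (hM : ∀ ℓ : ℕ, M ℓ = {a : ℤ | a ∈ A ∧ -((ℓ : ℤ) * n) ≤ a ∧ a < (-(ℓ : ℤ) + 1) * n}.ncard) :
    (∑ ℓ ∈ Finset.Icc 1 n, ((N ℓ + M ℓ : ℕ) : ℝ) / Real.sqrt ℓ) ^ 2 <
      9 * n * (1 + Real.log n) := by
  have hsq : ∑ ℓ ∈ Finset.Icc 1 n, ((N ℓ + M ℓ : ℕ) : ℝ) ^ 2 < 9 * n := by
    have hlt := hA.five_mul_sum_sq_card_blocks_lt hn n
    simp only [← ncard_eq_card_posBlock, ← ncard_eq_card_negBlock, ← hN, ← hM] at hlt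
    exact_mod_cast (by omega : ∑ ℓ ∈ Finset.Icc 1 n, (N ℓ + M ℓ) ^ 2 < 9 * n)
  exact (sq_sum_div_sqrt_le _ n).trans_lt (mul_lt_mul_of_pos_right hsq (by positivity))

/-- For a unique representation basis,
`(∑_{ℓ=1}^{n} (N_ℓ + M_ℓ)/ℓ^{1/2})² < 14 n (1 + log n)`. -/
theorem urb_weighted_sum_sq_lt (A : Set ℤ) (hA : IsUniqueRepBasis A) (n : ℕ) (hn : 0 < n)
    (N M : ℕ → ℕ)
    (hN : ∀ ℓ : ℕ, N ℓ = {a : ℤ | a ∈ A ∧ ((ℓ : ℤ) - 1) * n < a ∧ a ≤ (ℓ : ℤ) * n}.ncard)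
    (hM : ∀ ℓ : ℕ, M ℓ = {a : ℤ | a ∈ A ∧ -((ℓ : ℤ) * n) ≤ a ∧ a < (-(ℓ : ℤ) + 1) * n}.ncard) :
    (∑ ℓ ∈ Finset.Icc 1 n, ((N ℓ + M ℓ : ℕ) : ℝ) / Real.sqrt ℓ) ^ 2 <
      14 * n * (1 + Real.log n) := by
  refine (urb_weighted_sum_sq_lt_general A hA.isSidon n hn N M hN hM).trans_le ?_
  gcongr
  norm_num
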